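/- arXiv:2411.04560 — 9 statements merged into one kernel-verified Lean document; each statement's English description precedes it below -/
import Mathlib

section
/- Let D be a digraph on a finite vertex set V in which every vertex has at least one in-neighbor, and suppose γ_t(D) = |V| − 1. Then for every subset S ⊆ V, the union of the out-neighborhoods of the vertices of S has cardinality at most |S| + 1, i.e., |⋃_{v∈S} N⁺(v)| ≤ |S| + 1. -/
/-- A set `S` is a total dominating set of the digraph `D` (given as its arc
relation) if every vertex has an in-neighbor belonging to `S`. -/
def TotalDomSet {V : Type} (D : V → V → Prop) (S : Set V) : Prop :=
  ∀ v : V, ∃ u ∈ S, D u v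

/-- The total domination number of a digraph: the least cardinality of a total
dominating set. -/
noncomputable def totalDomNum {V : Type} (D : V → V → Prop) : ℕ :=
  sInf {n | ∃ S : Set V, TotalDomSet D S ∧ S.ncard = n}

/-- `D` is an orientation of the simple graph `G`: every arc of `D` lies on an
edge of `G`, and every edge of `G` carries exactly one of the two possible arcs. -/
def IsOrientation {V : Type} (G : SimpleGraph V) (D : V → V → Prop) : Prop :=
  (∀ u v : V, D u v → G.Adj u v) ∧ ∀ u v : V, G.Adj u v → (D u v ↔ ¬ D v u)

/-- An orientation (digraph) is valid if every vertex has at least one in-neighbor. -/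
def IsValidOrientation {V : Type} (D : V → V → Prop) : Prop :=
  ∀ v : V, ∃ u : V, D u v

/-- The upper orientable total domination number of `G`. -/
noncomputable def DOMt {V : Type} [Fintype V] (G : SimpleGraph V) : ℕ :=
  sSup {n | ∃ D : V → V → Prop, IsOrientation G D ∧ IsValidOrientation D ∧ totalDomNum D = n}

/-- The lower orientable total domination number of `G`. -/
noncomputable def domt {V : Type} [Fintype V] (G : SimpleGraph V) : ℕ :=
  sInf {n | ∃ D : V → V → Prop, IsOrientation G D ∧ IsValidOrientation D ∧ totalDomNum D = n}

/-- Adding to `S` one in-neighbor of each vertex that `S` does not dominate gives a total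
dominating set. -/
theorem totalDomNum_le_ncard_add_ncard_compl {V : Type} [Finite V] {D : V → V → Prop}
    (hvalid : ∀ v : V, ∃ u : V, D u v) (S : Set V) :
    totalDomNum D ≤ S.ncard + (⋃ v ∈ S, {w : V | D v w})ᶜ.ncard := by
  choose f hf using hvalid
  set U : Set V := ⋃ v ∈ S, {w : V | D v w} with hU
  have hdom : TotalDomSet D (S ∪ f '' Uᶜ) := by
    intro v
    by_cases hv : v ∈ U
    · obtain ⟨u, hu, huv⟩ : ∃ u ∈ S, D u v := by simpa [hU] using hv
      exact ⟨u, Or.inl hu, huv⟩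
    · exact ⟨f v, Or.inr ⟨v, hv, rfl⟩, hf v⟩
  calc totalDomNum D ≤ (S ∪ f '' Uᶜ).ncard := Nat.sInf_le ⟨_, hdom, rfl⟩
    _ ≤ S.ncard + (f '' Uᶜ).ncard := Set.ncard_union_le _ _
    _ ≤ S.ncard + Uᶜ.ncard := Nat.add_le_add_left (Set.ncard_image_le (Set.toFinite _)) _

/-- In a digraph with all in-degrees positive whose total domination number is
`|V| - 1`, no vertex set `S` dominates more than `|S| + 1` vertices. -/
theorem stmt_3 {V : Type} [Fintype V] (D : V → V → Prop)
    (hvalid : ∀ v : V, ∃ u : V, D u v)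
    (hγ : totalDomNum D = Fintype.card V - 1) :
    ∀ S : Set V, (⋃ v ∈ S, {w : V | D v w}).ncard ≤ S.ncard + 1 := by
  intro S
  have hle := totalDomNum_le_ncard_add_ncard_compl hvalid S
  have hcard := Set.ncard_add_ncard_compl (⋃ v ∈ S, {w : V | D v w})
  rw [Nat.card_eq_fintype_card] at hcard
  omega
end

section
/- Let D be a digraph on a finite vertex set V in which every vertex has at least one in-neighbor, and suppose γ_t(D) = |V| − 1. Then every vertex of D has out-degree at most 2. -/
/-- In a digraph with all in-degrees positive whose total domination number is
`|V| - 1`, every out-degree is at most 2. -/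
theorem stmt_4 {V : Type} [Fintype V] (D : V → V → Prop)
    (hvalid : ∀ v : V, ∃ u : V, D u v)
    (hγ : totalDomNum D = Fintype.card V - 1) :
    ∀ v : V, {w : V | D v w}.ncard ≤ 2 := by
  intro v
  choose f hf using hvalid
  set N : Set V := {w : V | D v w}
  have hdom : TotalDomSet D (insert v (f '' Nᶜ)) := by
    intro w
    by_cases hw : D v w
    · exact ⟨v, Set.mem_insert _ _, hw⟩
    · exact ⟨f w, Set.mem_insert_of_mem _ (Set.mem_image_of_mem f hw), hf w⟩
  have hle : totalDomNum D ≤ (insert v (f '' Nᶜ)).ncard := Nat.sInf_le ⟨_, hdom, rfl⟩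
  have hinsert := Set.ncard_insert_le v (f '' Nᶜ)
  have himage : (f '' Nᶜ).ncard ≤ Nᶜ.ncard := Set.ncard_image_le
  have hcompl := Set.ncard_add_ncard_compl N
  rw [Nat.card_eq_fintype_card] at hcompl
  omega
end

section
/- Let D be a digraph on a finite vertex set V in which every vertex has at least one in-neighbor, and suppose γ_t(D) = |V| − 1. If u and v are two distinct vertices each having out-degree 2, then |N⁺(u) ∪ N⁺(v)| ≤ 3; equivalently, u and v have at least one common out-neighbor. -/
theorem totalDomNum_le_ncard {V : Type} {D : V → V → Prop} {S : Set V}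
    (hS : TotalDomSet D S) : totalDomNum D ≤ S.ncard :=
  Nat.sInf_le ⟨S, hS, rfl⟩

/-- Two vertices dominate their joint out-neighborhood, and every remaining vertex
can be dominated at the cost of one vertex each. -/
theorem totalDomNum_add_ncard_union_le {V : Type} [Fintype V] {D : V → V → Prop}
    (hvalid : ∀ v : V, ∃ u : V, D u v) (u v : V) :
    totalDomNum D + ({w : V | D u w} ∪ {w : V | D v w}).ncard ≤ Fintype.card V + 2 := by
  choose f hf using hvalid
  set N := {w : V | D u w} ∪ {w : V | D v w}
  have hS : TotalDomSet D ({u, v} ∪ f '' Nᶜ) := by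
    intro w
    by_cases hw : w ∈ N
    · rcases hw with hw | hw
      · exact ⟨u, by simp, hw⟩
      · exact ⟨v, by simp, hw⟩
    · exact ⟨f w, Or.inr ⟨w, hw, rfl⟩, hf w⟩
  have hle := totalDomNum_le_ncard hS
  have hunion := Set.ncard_union_le {u, v} (f '' Nᶜ)
  have hpair : ({u, v} : Set V).ncard ≤ 2 := by
    simpa using Set.ncard_insert_le u {v}
  have himage := Set.ncard_image_le (f := f) (Set.toFinite Nᶜ)
  have hcompl := Set.ncard_add_ncard_compl N
  rw [Nat.card_eq_fintype_card] at hcompl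
  omega

/-- In a digraph with all in-degrees positive whose total domination number is
`|V| - 1`, any two distinct vertices of out-degree 2 have out-neighborhoods
whose union has at most 3 elements; equivalently they share an out-neighbor. -/
theorem stmt_5 {V : Type} [Fintype V] (D : V → V → Prop)
    (hvalid : ∀ v : V, ∃ u : V, D u v)
    (hγ : totalDomNum D = Fintype.card V - 1)
    (u v : V) (huv : u ≠ v)
    (hu : {w : V | D u w}.ncard = 2) (hv : {w : V | D v w}.ncard = 2) :
    ({w : V | D u w} ∪ {w : V | D v w}).ncard ≤ 3 ∧ ∃ w : V, D u w ∧ D v w := by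
  have hle := totalDomNum_add_ncard_union_le hvalid u v
  have hinter := Set.ncard_union_add_ncard_inter {w : V | D u w} {w : V | D v w}
  have hpos : 0 < Fintype.card V := Fintype.card_pos_iff.mpr ⟨u⟩
  have hcard : ({w : V | D u w} ∪ {w : V | D v w}).ncard ≤ 3 := by omega
  refine ⟨hcard, ?_⟩
  exact Set.nonempty_of_ncard_ne_zero (s := {w : V | D u w} ∩ {w : V | D v w}) (by omega)
end

section
/- Let G be a finite simple graph and let D be a valid orientation of G with γ_t(D) = |V(G)|. Then G is 2-regular (every vertex has degree exactly 2), i.e., G is a disjoint union of cycles. -/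
/-- A function choosing an in-neighbor of every vertex has a total dominating range, so it is
surjective when the total domination number is the order of the digraph. -/
theorem surjective_of_totalDomNum_eq_card {V : Type} [Fintype V] {D : V → V → Prop}
    (hγ : totalDomNum D = Fintype.card V) {f : V → V} (hf : ∀ v, D (f v) v) :
    Function.Surjective f := by
  have hle : totalDomNum D ≤ (Set.range f).ncard :=
    Nat.sInf_le ⟨Set.range f, fun v => ⟨f v, Set.mem_range_self v, hf v⟩, rfl⟩
  rw [hγ, ← Nat.card_eq_fintype_card, ← Set.ncard_univ] at hle
  exact Set.range_eq_univ.mp (Set.eq_of_subset_of_ncard_le (Set.subset_univ _) hle)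

/-- When the total domination number is the order of the digraph, in-neighbors are unique. -/
theorem eq_of_totalDomNum_eq_card {V : Type} [Fintype V] {D : V → V → Prop}
    (hγ : totalDomNum D = Fintype.card V) {f : V → V} (hf : ∀ v, D (f v) v) {u v : V}
    (huv : D u v) : u = f v := by
  classical
  have hinj := Finite.injective_iff_surjective.mpr (surjective_of_totalDomNum_eq_card hγ hf)
  have hupdate : ∀ w, D (Function.update f v u w) w := by
    intro w
    by_cases hw : w = v
    · subst hw
      simpa using huv
    · simpa [hw] using hf w
  obtain ⟨w, hw⟩ := surjective_of_totalDomNum_eq_card hγ hupdate (f v)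
  by_cases hwv : w = v
  · simpa [hwv] using hw
  · rw [Function.update_of_ne hwv] at hw
    exact absurd (hinj hw) hwv

/-- If a finite simple graph has a valid orientation with total domination
number `|V(G)|`, then `G` is 2-regular, i.e. a disjoint union of cycles. -/
theorem stmt_9 {V : Type} [Fintype V] (G : SimpleGraph V) (D : V → V → Prop)
    (hor : IsOrientation G D) (hvalid : IsValidOrientation D)
    (hγ : totalDomNum D = Fintype.card V) :
    ∀ v : V, (G.neighborSet v).ncard = 2 := by
  choose f hf using hvalid
  have hsurj := surjective_of_totalDomNum_eq_card hγ hf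
  have hinj := Finite.injective_iff_surjective.mpr hsurj
  intro v
  obtain ⟨w, rfl⟩ := hsurj v
  have hne : f (f w) ≠ w := by
    intro h
    have hback := hf (f w)
    rw [h] at hback
    exact (hor.2 _ _ (hor.1 _ _ hback)).mp hback (hf w)
  rw [Set.ncard_eq_two]
  refine ⟨f (f w), w, hne, Set.ext fun x => ?_⟩
  simp only [SimpleGraph.mem_neighborSet, Set.mem_insert_iff, Set.mem_singleton_iff]
  constructor
  · intro h
    by_cases hx : D (f w) x
    · exact Or.inr (hinj (eq_of_totalDomNum_eq_card hγ hf hx)).symm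
    · exact Or.inl (eq_of_totalDomNum_eq_card hγ hf (by
        by_contra hx'
        exact hx ((hor.2 _ _ h).mpr hx')))
  · rintro (rfl | rfl)
    · exact (hor.1 _ _ (hf _)).symm
    · exact hor.1 _ _ (hf _)
end

section
/- Let G be a finite connected simple graph having exactly one vertex of degree 1, exactly one vertex of degree 3, and all other vertices of degree 2 (so G is obtained from a cycle C_k, k ≥ 3, and a path P_ℓ, ℓ ≥ 2, by identifying one leaf of the path with a vertex of the cycle). Then G admits a valid orientation, and every valid orientation D of G satisfies γ_t(D) = |V(G)| − 1. -/
open Finset in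
/-- If all degrees are 2 except for one 1 and one 3, the degree sum is twice the order. -/
theorem sum_degree_of_one_leaf_one_branch {V : Type} [Fintype V] (G : SimpleGraph V)
    [DecidableRel G.Adj] (a b : V) (hab : a ≠ b) (ha : G.degree a = 1) (hb : G.degree b = 3)
    (h : ∀ v, v ≠ a → v ≠ b → G.degree v = 2) :
    ∑ v, G.degree v = 2 * Fintype.card V := by
  classical
  have key : ∀ v, G.degree v + (if v = a then 1 else 0) = 2 + (if v = b then 1 else 0) := by
    intro v
    by_cases hva : v = a
    · subst hva; simp [ha, hab]
    · by_cases hvb : v = b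
      · subst hvb; simp [hb, hva]
      · simp [hva, hvb, h v hva hvb]
  have := Finset.sum_congr (rfl : (univ : Finset V) = univ) fun v _ => key v
  simp only [sum_add_distrib, sum_ite_eq', mem_univ, if_true, sum_const, smul_eq_mul,
    card_univ] at this
  omega

theorem SimpleGraph.Connected.exists_adj_dist_lt {V : Type} {G : SimpleGraph V}
    (hG : G.Connected) {u w : V} (hne : w ≠ u) :
    ∃ x, G.Adj x w ∧ G.dist x u < G.dist w u := by
  obtain ⟨p, hp⟩ := hG.exists_walk_length_eq_dist w u
  cases p with
  | nil => exact absurd rfl hne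
  | cons hadj q =>
    refine ⟨_, hadj.symm, ?_⟩
    have := SimpleGraph.dist_le q
    rw [SimpleGraph.Walk.length_cons] at hp
    omega

/-- A finite connected graph with at least as many edges as vertices has a valid orientation:
orient a non-bridge towards one of its ends `u`, and all other edges away from `u`. -/
theorem exists_validOrientation {V : Type} [Fintype V] (G : SimpleGraph V) [Fintype G.edgeSet]
    (hG : G.Connected) (hcard : Fintype.card V ≤ G.edgeFinset.card) :
    ∃ D : V → V → Prop, IsOrientation G D ∧ IsValidOrientation D := by
  classical
  have hcyc : ¬ G.IsAcyclic := fun h => by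
    have := SimpleGraph.IsTree.card_edgeFinset ⟨hG, h⟩
    omega
  rw [SimpleGraph.isAcyclic_iff_forall_adj_isBridge] at hcyc
  push Not at hcyc
  obtain ⟨u, v, huv, hb⟩ := hcyc
  have hH := hG.connected_delete_edge_of_not_isBridge hb
  set H := G.deleteEdges {s(u, v)} with hHdef
  have hHadj : ∀ x y, H.Adj x y ↔ G.Adj x y ∧ ¬ (x = u ∧ y = v ∨ x = v ∧ y = u) := by
    intro x y
    simp [hHdef, SimpleGraph.deleteEdges_adj]
  let e := Fintype.equivFin V
  have hne := huv.ne
  refine ⟨fun x y => (x = v ∧ y = u) ∨ (H.Adj x y ∧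
    (H.dist x u < H.dist y u ∨ (H.dist x u = H.dist y u ∧ e x < e y))), ⟨?_, ?_⟩, ?_⟩
  · rintro x y (⟨rfl, rfl⟩ | ⟨h, -⟩)
    · exact huv.symm
    · exact ((hHadj x y).1 h).1
  · intro x y hxy
    have hexy : e x ≠ e y := fun h => hxy.ne (e.injective h)
    have hx := hHadj x y
    have hy := hHadj y x
    have := hxy.symm
    rcases lt_or_gt_of_ne hexy with h | h <;> grind
  · intro w
    by_cases hw : w = u
    · exact ⟨v, Or.inl ⟨rfl, hw⟩⟩
    · obtain ⟨x, hx, hlt⟩ := hH.exists_adj_dist_lt hw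
      exact ⟨x, Or.inr ⟨hx, Or.inl hlt⟩⟩

section Counting

open Finset

variable {V : Type} [Fintype V] {G : SimpleGraph V} {D : V → V → Prop}
  [DecidableRel G.Adj] [DecidableRel D]

theorem IsOrientation.card_in_add_card_out (hD : IsOrientation G D) (v : V) :
    #{u | D u v} + #{u | D v u} = G.degree v := by
  classical
  rw [← card_union_of_disjoint, ← G.card_neighborFinset_eq_degree]
  · congr 1
    ext u
    have h1 := hD.1 u v
    have h2 := hD.1 v u
    have h3 := hD.2 u v
    simp only [mem_union, mem_filter, mem_univ, true_and, SimpleGraph.mem_neighborFinset]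
    grind [SimpleGraph.adj_comm]
  · rw [disjoint_filter]
    intro u _ huv hvu
    exact (hD.2 u v (hD.1 u v huv)).1 huv hvu

/-- In a valid orientation of a graph with as many edges as vertices, every in-degree is one. -/
theorem IsOrientation.card_in_eq_one (hD : IsOrientation G D) (hval : IsValidOrientation D)
    (hsum : ∑ v, G.degree v = 2 * Fintype.card V) (v : V) : #{u | D u v} = 1 := by
  have hpos : ∀ v ∈ (univ : Finset V), 1 ≤ #{u | D u v} := fun v _ => by
    obtain ⟨u, hu⟩ := hval v
    exact card_pos.2 ⟨u, by simpa using hu⟩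
  have hdc : ∑ v, #{u | D v u} = ∑ v, #{u | D u v} :=
    sum_card_bipartiteAbove_eq_sum_card_bipartiteBelow D (s := univ) (t := univ)
  have htot : ∑ v, #{u | D u v} + ∑ v, #{u | D v u} = 2 * Fintype.card V := by
    rw [← sum_add_distrib, ← hsum]
    exact sum_congr rfl fun v _ => hD.card_in_add_card_out v
  have heq : ∑ _v : V, 1 = ∑ v, #{u | D u v} := by
    simp only [sum_const, card_univ, smul_eq_mul]
    omega
  exact ((sum_eq_sum_iff_of_le hpos).1 heq v (mem_univ v)).symm

end Counting

/-- If every vertex has a unique in-neighbor, the vertices of positive out-degree form the least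
total dominating set. -/
theorem totalDomNum_eq_ncard {V : Type} [Finite V] {D : V → V → Prop}
    (h : ∀ v, ∃! u, D u v) : totalDomNum D = {u | ∃ v, D u v}.ncard := by
  refine IsLeast.csInf_eq ⟨⟨_, fun v => ?_, rfl⟩, ?_⟩
  · obtain ⟨u, hu, -⟩ := h v
    exact ⟨u, ⟨v, hu⟩, hu⟩
  · rintro n ⟨S, hS, rfl⟩
    refine Set.ncard_le_ncard ?_ (Set.toFinite S)
    rintro u ⟨v, hv⟩
    obtain ⟨w, hw, hwv⟩ := hS v
    rwa [(h v).unique hv hwv]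

/-- If `G` is a finite connected simple graph with exactly one vertex of degree
1, exactly one vertex of degree 3 and all other vertices of degree 2 (so `G` is
a cycle with a pendant path attached), then `G` admits a valid orientation and
every valid orientation `D` of `G` satisfies `γ_t(D) = |V(G)| - 1`. -/
theorem stmt_11 {V : Type} [Fintype V] (G : SimpleGraph V) (hconn : G.Connected)
    (a b : V) (hab : a ≠ b)
    (hdeg1 : (G.neighborSet a).ncard = 1)
    (hdeg3 : (G.neighborSet b).ncard = 3)
    (hdeg2 : ∀ v : V, v ≠ a → v ≠ b → (G.neighborSet v).ncard = 2) :
    (∃ D : V → V → Prop, IsOrientation G D ∧ IsValidOrientation D) ∧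
      ∀ D : V → V → Prop, IsOrientation G D → IsValidOrientation D →
        totalDomNum D = Fintype.card V - 1 := by
  classical
  have hdeg : ∀ v, (G.neighborSet v).ncard = G.degree v := fun v => by
    rw [Set.ncard_eq_toFinset_card', SimpleGraph.degree, SimpleGraph.neighborFinset]
  simp only [hdeg] at hdeg1 hdeg3 hdeg2
  have hsum := sum_degree_of_one_leaf_one_branch G a b hab hdeg1 hdeg3 hdeg2
  refine ⟨exists_validOrientation G hconn ?_, fun D hD hval => ?_⟩
  · have := G.sum_degrees_eq_twice_card_edges
    omega
  · have hin := hD.card_in_eq_one hval hsum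
    rw [totalDomNum_eq_ncard fun v => ?_]
    · have : {u | ∃ v, D u v} = {a}ᶜ := by
        ext u
        have hio := hD.card_in_add_card_out u
        rw [hin u] at hio
        have hout : (∃ v, D u v) ↔ 0 < (Finset.univ.filter fun v => D u v).card := by
          simp [Finset.card_pos, Finset.Nonempty]
        rw [Set.mem_ofPred_eq, hout, Set.mem_compl_singleton_iff]
        by_cases hua : u = a
        · subst hua; simp only [ne_eq, not_true_eq_false, iff_false]; omega
        · by_cases hub : u = b
          · subst hub; simp only [ne_eq, hua, not_false_eq_true, iff_true]; omega
          · have := hdeg2 u hua hub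
            simp only [ne_eq, hua, not_false_eq_true, iff_true]; omega
      rw [this, Set.ncard_compl, Set.ncard_singleton, Nat.card_eq_fintype_card]
    · obtain ⟨u, hu⟩ := Finset.card_eq_one.1 (hin v)
      simp only [Finset.ext_iff, Finset.mem_filter, Finset.mem_univ, true_and,
        Finset.mem_singleton] at hu
      exact ⟨u, (hu u).2 rfl, fun w hw => (hu w).1 hw⟩
end

section
/- Let D be a digraph on a finite vertex set V in which every vertex has at least one in-neighbor, with γ_t(D) = |V| − 1, and let s ∈ V be a vertex with out-degree 0 and in-degree at least 2 in D. Let D' be the restriction of D to V ∖ {s}. Then γ_t(D') = |V| − 1; that is, the only total dominating set of D' is the whole vertex set V ∖ {s}. -/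
/-- If the whole vertex set is the only total dominating set, then the total domination number
is the number of vertices. -/
theorem totalDomNum_eq_card {V : Type} [Fintype V] {D : V → V → Prop}
    (huniv : TotalDomSet D Set.univ) (h : ∀ S, TotalDomSet D S → S = Set.univ) :
    totalDomNum D = Fintype.card V := by
  obtain ⟨S, hS, hcard⟩ :=
    Nat.sInf_mem (s := {n | ∃ S : Set V, TotalDomSet D S ∧ S.ncard = n}) ⟨_, Set.univ, huniv, rfl⟩
  rw [totalDomNum, ← hcard, h S hS, Set.ncard_univ, Nat.card_eq_fintype_card]

/-- If `γ_t(D) = |V| - 1` and `s` has out-degree 0 and in-degree at least 2,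
then the restriction `D'` of `D` to `V ∖ {s}` satisfies `γ_t(D') = |V| - 1`,
i.e. the only total dominating set of `D'` is the whole vertex set `V ∖ {s}`. -/
theorem stmt_13 {V : Type} [Fintype V] (D : V → V → Prop)
    (hvalid : ∀ v : V, ∃ u : V, D u v)
    (hγ : totalDomNum D = Fintype.card V - 1)
    (s : V) (hout : ∀ w : V, ¬ D s w) (hin : 2 ≤ {u : V | D u s}.ncard) :
    totalDomNum (fun a b : {v : V // v ≠ s} => D a.1 b.1) = Fintype.card V - 1 ∧
      ∀ S : Set {v : V // v ≠ s},
        TotalDomSet (fun a b : {v : V // v ≠ s} => D a.1 b.1) S → S = Set.univ := by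
  classical
  have hS : ∀ S : Set {v : V // v ≠ s},
      TotalDomSet (fun a b : {v : V // v ≠ s} => D a.1 b.1) S → S = Set.univ := by
    intro S hS
    by_contra hne
    obtain ⟨⟨w, hws⟩, hw⟩ := (Set.ne_univ_iff_exists_notMem S).1 hne
    have hT : TotalDomSet D ({s, w}ᶜ : Set V) := by
      intro v
      by_cases hv : v = s
      · subst hv
        obtain ⟨u, hu, huw⟩ := Set.exists_ne_of_one_lt_ncard hin w
        refine ⟨u, ?_, hu⟩
        rintro (rfl | rfl)
        · exact hout _ hu
        · exact huw rfl
      · obtain ⟨⟨u, hus⟩, huS, hu⟩ := hS ⟨v, hv⟩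
        refine ⟨u, ?_, hu⟩
        rintro (rfl | rfl)
        · exact hus rfl
        · exact hw huS
    have hle := totalDomNum_le_ncard hT
    have hadd := Set.ncard_add_ncard_compl ({s, w} : Set V)
    rw [Set.ncard_pair hws.symm, Nat.card_eq_fintype_card] at hadd
    omega
  have huniv : TotalDomSet (fun a b : {v : V // v ≠ s} => D a.1 b.1) Set.univ := by
    intro v
    obtain ⟨u, hu⟩ := hvalid v
    exact ⟨⟨u, fun h => hout v (h ▸ hu)⟩, trivial, hu⟩
  refine ⟨?_, hS⟩
  rw [totalDomNum_eq_card huniv hS]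
  simp [Fintype.card_subtype_compl]
end

section
/- Let G be a finite connected simple graph and D a valid orientation of G with γ_t(D) = |V(G)| − 1. Suppose s ∈ V(G) has out-degree 0 and in-degree at least 2 in D. Then the subgraph of G induced on V(G) ∖ {s} is 2-regular, i.e., G − s is a disjoint union of cycles. -/
/-- If `s` is a sink and `γ_t(D) = |V| - 1`, then every other vertex is the only in-neighbor of
some vertex. -/
theorem exists_unique_inNeighbor_of_totalDomNum {V : Type} [Fintype V] {D : V → V → Prop}
    (hvalid : IsValidOrientation D) (hγ : totalDomNum D = Fintype.card V - 1)
    {s : V} (hout : ∀ w : V, ¬ D s w) {u : V} (hu : u ≠ s) :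
    ∃ v : V, D u v ∧ ∀ w : V, D w v → w = u := by
  classical
  by_contra! hcon
  have hdom : TotalDomSet D (({s, u} : Set V)ᶜ) := by
    intro v
    obtain ⟨w, hw⟩ : ∃ w, D w v ∧ w ≠ u := by
      by_cases huv : D u v
      · exact hcon v huv
      · obtain ⟨w, hw⟩ := hvalid v
        exact ⟨w, hw, fun h => huv (h ▸ hw)⟩
    refine ⟨w, ?_, hw.1⟩
    have hws : w ≠ s := fun h => hout v (h ▸ hw.1)
    simp [hws, hw.2]
  have hle : totalDomNum D ≤ (({s, u} : Set V)ᶜ).ncard := Nat.sInf_le ⟨_, hdom, rfl⟩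
  have hcard := Set.ncard_add_ncard_compl ({s, u} : Set V)
  rw [Set.ncard_pair hu.symm, Nat.card_eq_fintype_card] at hcard
  omega

/-- If `G` is connected, `D` is a valid orientation with `γ_t(D) = |V(G)| - 1`,
and `s` has out-degree 0 and in-degree at least 2 in `D`, then the subgraph of
`G` induced on `V(G) ∖ {s}` is 2-regular, i.e. `G - s` is a disjoint union of
cycles. -/
theorem stmt_14 {V : Type} [Fintype V] (G : SimpleGraph V) (hconn : G.Connected)
    (D : V → V → Prop) (hor : IsOrientation G D) (hvalid : IsValidOrientation D)
    (hγ : totalDomNum D = Fintype.card V - 1)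
    (s : V) (hout : ∀ w : V, ¬ D s w) (hin : 2 ≤ {u : V | D u s}.ncard) :
    ∀ v : V, v ≠ s → (G.neighborSet v \ {s}).ncard = 2 := by
  classical
  choose! f hf hf_unique using
    fun u (hu : u ≠ s) => exists_unique_inNeighbor_of_totalDomNum hvalid hγ hout hu
  have hf_ne : ∀ u, u ≠ s → f u ≠ s := by
    intro u hu h
    have hsub : {w : V | D w s} ⊆ {u} := fun w hw => hf_unique u hu w (h ▸ hw)
    have := Set.ncard_le_ncard hsub
    rw [Set.ncard_singleton] at this
    omega
  have hf_inj : Set.InjOn f {s}ᶜ := by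
    intro u hu w hw h
    exact hf_unique w hw u (h ▸ hf u hu)
  have hf_surj : Set.SurjOn f {s}ᶜ {s}ᶜ :=
    ((Set.toFinite _).injOn_iff_bijOn_of_mapsTo hf_ne |>.1 hf_inj).surjOn
  intro v hv
  obtain ⟨u, hu, rfl⟩ := hf_surj hv
  have hset : G.neighborSet (f u) \ {s} = {u, f (f u)} := by
    ext w
    simp only [Set.mem_sdiff, SimpleGraph.mem_neighborSet, Set.mem_singleton_iff,
      Set.mem_insert_iff]
    constructor
    · rintro ⟨hadj, hw⟩
      by_cases h : D (f u) w
      · right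
        obtain ⟨x, hx, rfl⟩ := hf_surj hw
        rw [hf_unique x hx _ h]
      · exact Or.inl (hf_unique u hu w ((hor.2 _ _ hadj.symm).2 h))
    · rintro (rfl | rfl)
      · exact ⟨(hor.1 _ _ (hf _ hu)).symm, hu⟩
      · exact ⟨hor.1 _ _ (hf _ hv), hf_ne _ hv⟩
  rw [hset, Set.ncard_pair]
  intro h
  have hback : D (f u) u := by
    have := hf _ hv
    rwa [← h] at this
  exact (hor.2 _ _ (hor.1 _ _ hback)).1 hback (hf u hu)
end

section
/- Let D be a digraph on a finite vertex set V in which every vertex has at least one in-neighbor, with γ_t(D) = |V| − 1, and let s ∈ V be a vertex with out-degree 0 in D. Let v ∈ V with v ≠ s, and let D' be the digraph obtained from D by adding the single arc (s, v). Then γ_t(D') = |V| − 1. -/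
theorem TotalDomSet.mono {V : Type} {D D' : V → V → Prop} {S : Set V}
    (hS : TotalDomSet D S) (h : ∀ a b, D a b → D' a b) : TotalDomSet D' S := fun w =>
  let ⟨u, hu, huw⟩ := hS w
  ⟨u, hu, h u w huw⟩

/-- If every total dominating set of `D'` can be replaced by one of `D` that is no larger, then
`totalDomNum D ≤ totalDomNum D'`. -/
theorem totalDomNum_le_of_forall_exists {V : Type} {D D' : V → V → Prop}
    (hne : ∃ S, TotalDomSet D' S)
    (h : ∀ S, TotalDomSet D' S → ∃ T, TotalDomSet D T ∧ T.ncard ≤ S.ncard) :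
    totalDomNum D ≤ totalDomNum D' := by
  obtain ⟨S₀, hS₀⟩ := hne
  refine le_csInf ⟨_, S₀, hS₀, rfl⟩ ?_
  rintro _ ⟨S, hS, rfl⟩
  obtain ⟨T, hT, hTS⟩ := h S hS
  exact le_trans (Nat.sInf_le ⟨T, hT, rfl⟩) hTS

/-- Adding one arc at a vertex of out-degree 0 preserves the total domination number: in a total
dominating set of the new digraph, that vertex can be exchanged for an old in-neighbor of the head
of the new arc. -/
theorem totalDomNum_add_arc_of_sink {V : Type} [Finite V] {D : V → V → Prop}
    (hvalid : ∀ v, ∃ u, D u v) {s : V} (hs : ∀ w, ¬ D s w) (v : V) :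
    totalDomNum (fun a b : V => D a b ∨ (a = s ∧ b = v)) = totalDomNum D := by
  have huniv : TotalDomSet D Set.univ := fun w =>
    let ⟨u, hu⟩ := hvalid w
    ⟨u, Set.mem_univ u, hu⟩
  apply le_antisymm
  · exact totalDomNum_le_of_forall_exists ⟨_, huniv⟩ fun S hS =>
      ⟨S, hS.mono fun _ _ => Or.inl, le_rfl⟩
  · refine totalDomNum_le_of_forall_exists ⟨_, huniv.mono fun _ _ => Or.inl⟩ fun S hS => ?_
    by_cases hsS : s ∈ S
    · obtain ⟨u, hu⟩ := hvalid v
      refine ⟨insert u (S \ {s}), fun w => ?_, ?_⟩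
      · obtain ⟨x, hx, hxw | ⟨rfl, rfl⟩⟩ := hS w
        · refine ⟨x, Or.inr ⟨hx, ?_⟩, hxw⟩
          rintro rfl
          exact hs w hxw
        · exact ⟨u, Or.inl rfl, hu⟩
      · exact (Set.ncard_insert_le _ _).trans (Set.ncard_sdiff_singleton_add_one hsS).le
    · refine ⟨S, fun w => ?_, le_rfl⟩
      obtain ⟨x, hx, hxw | ⟨rfl, rfl⟩⟩ := hS w
      · exact ⟨x, hx, hxw⟩
      · exact absurd hx hsS

/-- Adding a single out-going arc at a vertex of out-degree 0 does not change a
total domination number equal to `|V| - 1`. -/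
theorem stmt_16 {V : Type} [Fintype V] (D : V → V → Prop)
    (hvalid : ∀ v : V, ∃ u : V, D u v)
    (hγ : totalDomNum D = Fintype.card V - 1)
    (s : V) (hs : ∀ w : V, ¬ D s w)
    (v : V) (hv : v ≠ s) :
    totalDomNum (fun a b : V => D a b ∨ (a = s ∧ b = v)) = Fintype.card V - 1 :=
  (totalDomNum_add_arc_of_sink hvalid hs v).trans hγ
end

section
/- Let G be a finite connected simple graph that admits a valid orientation D with γ_t(D) = |V(G)| − 1. Then the number of edges of G satisfies |E(G)| ≤ 2|V(G)| − 2. -/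
open Classical in
/-- The in-neighborhood of a vertex, as a finset. -/
noncomputable def inNbrs {V : Type} [Fintype V] (D : V → V → Prop) (w : V) : Finset V :=
  {u | D u w}

lemma IsOrientation.asymm {V : Type} {G : SimpleGraph V} {D : V → V → Prop}
    (hor : IsOrientation G D) {u v : V} (h : D u v) : ¬ D v u :=
  (hor.2 u v (hor.1 u v h)).1 h

section InNeighbors

variable {V : Type} [Fintype V] {G : SimpleGraph V} {D : V → V → Prop}

lemma mem_inNbrs {u w : V} : u ∈ inNbrs D w ↔ D u w := by
  simp [inNbrs]

/-- The number of edges is at most the sum of the in-degrees. -/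
lemma IsOrientation.ncard_edgeSet_le (hor : IsOrientation G D) :
    G.edgeSet.ncard ≤ ∑ w, (inNbrs D w).card := by
  classical
  have hsub : G.edgeSet ⊆
      ((Finset.univ.sigma (inNbrs D)).image fun p => s(p.2, p.1) : Finset (Sym2 V)) := by
    intro e
    induction e with
    | _ u v =>
      intro huv
      have huv : G.Adj u v := huv
      simp only [Finset.coe_image, Set.mem_image]
      by_cases h : D u v
      · exact ⟨⟨v, u⟩, by simpa [mem_inNbrs] using h, rfl⟩
      · exact ⟨⟨u, v⟩, by simpa [mem_inNbrs] using (hor.2 v u huv.symm).2 h, Sym2.eq_swap⟩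
  calc G.edgeSet.ncard ≤ _ := Set.ncard_le_ncard hsub (Finset.finite_toSet _)
    _ = _ := Set.ncard_coe_finset _
    _ ≤ _ := Finset.card_image_le
    _ = _ := Finset.card_sigma _ _

/-- If no total dominating set omits two vertices, then for all distinct `u` and `v` some
vertex has all its in-neighbors among them. -/
lemma exists_inNbrs_subset_pair [DecidableEq V] (hγ : Fintype.card V - 1 ≤ totalDomNum D)
    {u v : V} (huv : u ≠ v) : ∃ w, inNbrs D w ⊆ {u, v} := by
  by_contra! hcon
  have hdom : TotalDomSet D ((({u, v} : Finset V)ᶜ : Finset V) : Set V) := by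
    intro w
    obtain ⟨x, hx, hxuv⟩ := Finset.not_subset.1 (hcon w)
    exact ⟨x, Finset.mem_coe.2 (Finset.mem_compl.2 hxuv), mem_inNbrs.1 hx⟩
  have hle : totalDomNum D ≤ _ := Nat.sInf_le ⟨_, hdom, rfl⟩
  rw [Set.ncard_coe_finset, Finset.card_compl, Finset.card_pair huv] at hle
  have h2 := Finset.card_le_univ ({u, v} : Finset V)
  rw [Finset.card_pair huv] at h2
  omega

/-- A vertex with an out-neighbor has in-degree at most `|V| - 2`. -/
lemma IsOrientation.card_inNbrs_add_two_le (hor : IsOrientation G D) {z y : V} (h : D z y) :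
    (inNbrs D z).card + 2 ≤ Fintype.card V := by
  classical
  have hzy : z ≠ y := (hor.1 _ _ h).ne
  have hdisj : Disjoint (inNbrs D z) {z, y} := by
    rw [Finset.disjoint_right]
    intro x hx
    rw [mem_inNbrs]
    rcases Finset.mem_insert.1 hx with rfl | hx
    · exact fun hxx => hor.asymm hxx hxx
    · rw [Finset.mem_singleton.1 hx]
      exact hor.asymm h
  rw [← Finset.card_pair hzy, ← Finset.card_union_of_disjoint hdisj]
  exact Finset.card_le_univ _

lemma IsOrientation.card_inNbrs_lt (hor : IsOrientation G D) (z : V) :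
    (inNbrs D z).card < Fintype.card V :=
  Finset.card_lt_univ_of_notMem (x := z) fun h =>
    hor.asymm (mem_inNbrs.1 h) (mem_inNbrs.1 h)

end InNeighbors

/-- A finite connected simple graph admitting a valid orientation with total
domination number `|V(G)| - 1` has at most `2|V(G)| - 2` edges. -/
theorem stmt_17 {V : Type} [Fintype V] (G : SimpleGraph V) (hconn : G.Connected)
    (D : V → V → Prop) (hor : IsOrientation G D) (hvalid : IsValidOrientation D)
    (hγ : totalDomNum D = Fintype.card V - 1) :
    G.edgeSet.ncard ≤ 2 * Fintype.card V - 2 := by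
  classical
  have hn : 1 ≤ Fintype.card V := Fintype.card_pos_iff.2 hconn.nonempty
  have hchoose : G.edgeSet.ncard ≤ (Fintype.card V).choose 2 := by
    rw [← SimpleGraph.coe_edgeFinset, Set.ncard_coe_finset]
    exact SimpleGraph.card_edgeFinset_le_card_choose_two
  have hsum := hor.ncard_edgeSet_le
  -- `A` consists of the vertices that are the only in-neighbor of some vertex.
  let A : Finset V := {v | ∃ w, inNbrs D w = {v}}
  have hA : ∀ v : A, ∃ w, inNbrs D w = {v.1} := fun v => (Finset.mem_filter.1 v.2).2
  choose p hp using hA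
  have hpinj : Function.Injective p := fun u v huv =>
    Subtype.ext (Finset.singleton_injective ((hp u).symm.trans (huv ▸ hp v)))
  have hpair : ∀ e : Aᶜ.powersetCard 2, ∃ w, inNbrs D w = e.1 := by
    rintro ⟨e, he⟩
    obtain ⟨heA, hcard⟩ := Finset.mem_powersetCard.1 he
    obtain ⟨u, v, huv, rfl⟩ := Finset.card_eq_two.1 hcard
    obtain ⟨w, hw⟩ := exists_inNbrs_subset_pair hγ.ge huv
    have hu : u ∉ A := Finset.mem_compl.1 (heA (by simp))
    have hv : v ∉ A := Finset.mem_compl.1 (heA (by simp))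
    refine ⟨w, ?_⟩
    rw [← Finset.coe_subset, Finset.coe_pair, Set.subset_pair_iff_eq] at hw
    norm_cast at hw
    rcases hw with h | h | h | h
    · obtain ⟨x, hx⟩ := hvalid w
      simpa [h] using mem_inNbrs.2 hx
    · exact absurd (Finset.mem_filter.2 ⟨Finset.mem_univ _, w, h⟩) hu
    · exact absurd (Finset.mem_filter.2 ⟨Finset.mem_univ _, w, h⟩) hv
    · exact h
  choose q hq using hpair
  have hqinj : Function.Injective q := fun e f hef =>
    Subtype.ext ((hq e).symm.trans (hef ▸ hq f))
  have hcardq : ∀ e, (inNbrs D (q e)).card = 2 := fun e => by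
    rw [hq]; exact (Finset.mem_powersetCard.1 e.2).2
  let W : Finset V := Finset.univ.image p
  have hWcard : W.card = A.card := by
    rw [Finset.card_image_of_injective _ hpinj, Finset.card_univ, Fintype.card_coe]
  have hWc : Wᶜ.card = Aᶜ.card := by
    rw [Finset.card_compl, Finset.card_compl, hWcard]
  have hWsum : ∑ w ∈ W, (inNbrs D w).card = A.card := by
    rw [Finset.sum_image hpinj.injOn]
    simp [hp]
  have hqW : Finset.univ.image q ⊆ Wᶜ := by
    intro w hw
    obtain ⟨e, -, rfl⟩ := Finset.mem_image.1 hw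
    rw [Finset.mem_compl]
    intro hmem
    obtain ⟨v, -, hv⟩ := Finset.mem_image.1 hmem
    have := hcardq e
    rw [← hv, hp] at this
    simp at this
  have hqcard : (Finset.univ.image q).card = Aᶜ.card.choose 2 := by
    rw [Finset.card_image_of_injective _ hqinj, Finset.card_univ, Fintype.card_coe,
      Finset.card_powersetCard]
  have hqle := Finset.card_le_card hqW
  rw [hqcard, hWc] at hqle
  rw [← Finset.sum_add_sum_compl W, hWsum] at hsum
  have hAc := Finset.card_add_card_compl A
  have hb : Aᶜ.card ≤ 3 := by
    by_contra! hb
    rw [Nat.choose_two_right] at hqle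
    have : Aᶜ.card * 3 ≤ Aᶜ.card * (Aᶜ.card - 1) := Nat.mul_le_mul_left _ (by omega)
    omega
  obtain hb | hb | hb | hb : Aᶜ.card = 0 ∨ Aᶜ.card = 1 ∨ Aᶜ.card = 2 ∨ Aᶜ.card = 3 := by omega
  · rw [Finset.card_eq_zero.1 (hWc.trans hb), Finset.sum_empty] at hsum
    obtain h1 | h1 : Fintype.card V = 1 ∨ 2 ≤ Fintype.card V := by omega
    · rw [h1] at hchoose
      simpa [h1] using hchoose
    · omega
  · obtain ⟨z, hz⟩ := Finset.card_eq_one.1 (hWc.trans hb)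
    rw [hz, Finset.sum_singleton] at hsum
    have := hor.card_inNbrs_lt z
    omega
  · let e : Aᶜ.powersetCard 2 := ⟨Aᶜ, Finset.mem_powersetCard.2 ⟨subset_rfl, hb⟩⟩
    have hqe : q e ∈ Wᶜ := hqW (Finset.mem_image_of_mem q (Finset.mem_univ e))
    obtain ⟨z, hz⟩ := Finset.card_eq_one.1
      (show (Wᶜ.erase (q e)).card = 1 by rw [Finset.card_erase_of_mem hqe, hWc, hb])
    rw [← Finset.add_sum_erase _ _ hqe, hz, Finset.sum_singleton, hcardq] at hsum
    have hout : ∃ y, D z y := by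
      by_cases hzA : z ∈ A
      · exact ⟨p ⟨z, hzA⟩, mem_inNbrs.1 (by simp [hp])⟩
      · exact ⟨q e, mem_inNbrs.1 (by rw [hq]; exact Finset.mem_compl.2 hzA)⟩
    obtain ⟨y, hy⟩ := hout
    have := hor.card_inNbrs_add_two_le hy
    omega
  · have hqeq : Finset.univ.image q = Wᶜ :=
      Finset.eq_of_subset_of_card_le hqW (by rw [hqcard, hWc, hb]; decide)
    have hsum2 : ∑ w ∈ Wᶜ, (inNbrs D w).card = 6 := by
      rw [← hqeq, Finset.sum_image hqinj.injOn]
      simp [hcardq, hb]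
    rw [hsum2] at hsum
    obtain h1 | h1 | h1 : Fintype.card V = 3 ∨ Fintype.card V = 4 ∨ 5 ≤ Fintype.card V := by omega
    · rw [h1] at hchoose
      norm_num [Nat.choose] at hchoose
      omega
    · rw [h1] at hchoose
      norm_num [Nat.choose] at hchoose
      omega
    · omega
end
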